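/- arXiv:1412.7174 — 3 statements merged into one kernel-verified Lean document; each statement's English description precedes it below -/
import Mathlib

section
/- Let p_1,…,p_m > 0, let ρ_1,…,ρ_m be n×n complex positive semidefinite matrices with rank ρ_i = r_i, and let (Π_i)_{i=1}^m be a projective measurement on ℂ^n with rank Π_i = r_i for every i (so r_1+⋯+r_m = n). If Z = ∑_{k=1}^m p_k ρ_k Π_k is positive definite, then for every i the column space of ρ_i Π_i ρ_i equals the column space of ρ_i; in particular rank(ρ_i Π_i ρ_i) = r_i. -/
open Matrix
open scoped ComplexOrder

noncomputable section

/-- Rank-one outer product `x x*` as an `n × n` complex matrix. -/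
def outer {n : ℕ} (x : Fin n → ℂ) : Matrix (Fin n) (Fin n) ℂ :=
  Matrix.vecMulVec x (star x)

/-- A POVM indexed by `ι`: positive semidefinite elements summing to the identity. -/
def IsPOVM {ι : Type} [Fintype ι] {n : ℕ} (E : ι → Matrix (Fin n) (Fin n) ℂ) : Prop :=
  (∀ i, (E i).PosSemidef) ∧ ∑ i, E i = 1

/-- Success probability of the POVM `E` for the ensemble `(p, ρ)`. -/
def succProb {ι : Type} [Fintype ι] {n : ℕ} (p : ι → ℝ)
    (ρ E : ι → Matrix (Fin n) (Fin n) ℂ) : ℝ :=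
  ∑ i, p i * ((ρ i * E i).trace).re

/-- `P` is a POVM maximizing the success probability for the ensemble `(p, ρ)`. -/
def IsOptimal {ι : Type} [Fintype ι] {n : ℕ} (p : ι → ℝ)
    (ρ P : ι → Matrix (Fin n) (Fin n) ℂ) : Prop :=
  IsPOVM P ∧ ∀ E, IsPOVM E → succProb p ρ E ≤ succProb p ρ P

/-- An ensemble of states: positive probabilities summing to 1, states positive
semidefinite of trace 1. -/
def IsEnsemble {ι : Type} [Fintype ι] {n : ℕ} (p : ι → ℝ)
    (ρ : ι → Matrix (Fin n) (Fin n) ℂ) : Prop :=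
  (∀ i, 0 < p i) ∧ ∑ i, p i = 1 ∧ (∀ i, (ρ i).PosSemidef) ∧ ∀ i, (ρ i).trace = 1

/-- A linearly independent (LI) ensemble: the ranks sum to `n` and the column spaces
of the states together span `ℂ^n`. -/
def IsLIEnsemble {ι : Type} [Fintype ι] {n : ℕ} (p : ι → ℝ)
    (ρ : ι → Matrix (Fin n) (Fin n) ℂ) : Prop :=
  IsEnsemble p ρ ∧ (∑ i, (ρ i).rank = n) ∧
    (⨆ i, LinearMap.range (ρ i).mulVecLin) = ⊤

/-- A projective measurement: mutually orthogonal Hermitian idempotents summing to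
the identity. -/
def IsProjectiveMeasurement {ι : Type} [Fintype ι] {n : ℕ}
    (P : ι → Matrix (Fin n) (Fin n) ℂ) : Prop :=
  (∀ i j, i ≠ j → P i * P j = 0) ∧ (∀ i, P i * P i = P i) ∧
    (∀ i, (P i).IsHermitian) ∧ ∑ i, P i = 1

/-- The pretty good measurement of the ensemble `(q, σ)` (with elements
`S^{-1/2} qᵢσᵢ S^{-1/2}`, `S = ∑ qⱼσⱼ`, `S^{1/2}` the unique positive definite square
root of `S`) is an optimal POVM for the minimum error discrimination of `(p, ρ)`. -/
def PGMIsOptimal {m n : ℕ} (q : Fin m → ℝ) (σ : Fin m → Matrix (Fin n) (Fin n) ℂ)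
    (p : Fin m → ℝ) (ρ : Fin m → Matrix (Fin n) (Fin n) ℂ) : Prop :=
  ∀ R : Matrix (Fin n) (Fin n) ℂ, R.PosDef → R * R = ∑ j, (q j : ℂ) • σ j →
    IsOptimal p ρ (fun i => R⁻¹ * ((q i : ℂ) • σ i) * R⁻¹)

/-!
Orthogonality of the `Πₖ` gives `Z Πᵢ = pᵢ ρᵢ Πᵢ`. As `Z` is invertible, `ρᵢ Πᵢ` therefore has at
least the rank of `Πᵢ`, which is that of `ρᵢ`. Finally `ρᵢ Πᵢ ρᵢ = (ρᵢ Πᵢ)(ρᵢ Πᵢ)ᴴ` has the same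
rank as `ρᵢ Πᵢ`, and its column space lies in that of `ρᵢ`, so the two column spaces agree.
-/

lemma sum_mul_mul_of_orthogonalIdempotents {ι R : Type*} [Fintype ι] [Semiring R] {e : ι → R}
    (he : OrthogonalIdempotents e) (a : ι → R) (i : ι) :
    (∑ k, a k * e k) * e i = a i * e i := by
  classical
  simp only [Finset.sum_mul, mul_assoc, he.mul_eq, mul_ite, mul_zero, Finset.sum_ite_eq',
    Finset.mem_univ, if_true]

section Rank

variable {ι l m n R K : Type*} [Fintype m] [Fintype n]

lemma rank_mul_eq_right_of_isUnit_sum [Fintype ι] [DecidableEq n] [CommRing R]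
    {P : ι → Matrix n n R} (hP : OrthogonalIdempotents P) {A : ι → Matrix n n R}
    (hA : IsUnit (∑ k, A k * P k)) (i : ι) : (A i * P i).rank = (P i).rank := by
  rw [← sum_mul_mul_of_orthogonalIdempotents hP A i]
  exact rank_mul_eq_right_of_isUnit_det _ _ ((isUnit_iff_isUnit_det _).mp hA)

lemma rank_smul_le [CommSemiring R] [StrongRankCondition R] (c : R) (A : Matrix l n R) :
    (c • A).rank ≤ A.rank := by
  classical
  rw [smul_eq_mul_diagonal]
  exact rank_mul_le_left A _

lemma range_mulVecLin_mul_eq_of_rank_le [Field K] {A : Matrix l m K} {B : Matrix m n K}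
    (h : A.rank ≤ (A * B).rank) :
    LinearMap.range (A * B).mulVecLin = LinearMap.range A.mulVecLin := by
  refine Submodule.eq_of_le_of_finrank_le ?_ h
  rw [mulVecLin_mul]
  exact LinearMap.range_comp_le_range _ _

variable [Field K] [PartialOrder K] [StarRing K] [StarOrderedRing K]

lemma rank_mul_isStarProjection_mul_conjTranspose {Q : Matrix n n K} (hQ : IsStarProjection Q)
    (A : Matrix m n K) : (A * Q * Aᴴ).rank = (A * Q).rank := by
  have hfactor : A * Q * Aᴴ = (A * Q) * (A * Q)ᴴ := by
    have hQQ : Q * Q = Q := hQ.isIdempotentElem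
    have hQH : Qᴴ = Q := hQ.isSelfAdjoint
    rw [conjTranspose_mul, hQH, ← Matrix.mul_assoc, Matrix.mul_assoc A Q Q, hQQ]
  rw [hfactor, rank_self_mul_conjTranspose]

theorem stmt_5_general [Fintype ι] [DecidableEq n] {p : ι → K} {ρ P : ι → Matrix n n K}
    (hP : OrthogonalIdempotents P) (hZ : IsUnit (∑ k, p k • (ρ k * P k))) {i : ι}
    (hPi : (P i).IsHermitian) (hrank : (ρ i).rank ≤ (P i).rank) :
    LinearMap.range (ρ i * P i * (ρ i)ᴴ).mulVecLin = LinearMap.range (ρ i).mulVecLin ∧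
      (ρ i * P i * (ρ i)ᴴ).rank = (ρ i).rank := by
  simp only [← Matrix.smul_mul] at hZ
  have hle : (ρ i).rank ≤ (ρ i * P i * (ρ i)ᴴ).rank :=
    calc (ρ i).rank ≤ (P i).rank := hrank
      _ = (p i • ρ i * P i).rank := (rank_mul_eq_right_of_isUnit_sum hP hZ i).symm
      _ = (p i • (ρ i * P i)).rank := by rw [Matrix.smul_mul]
      _ ≤ (ρ i * P i).rank := rank_smul_le _ _
      _ = (ρ i * P i * (ρ i)ᴴ).rank :=
        (rank_mul_isStarProjection_mul_conjTranspose ⟨hP.idem i, hPi⟩ _).symm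
  rw [Matrix.mul_assoc] at hle ⊢
  exact ⟨range_mulVecLin_mul_eq_of_rank_le hle, (rank_mul_le_left _ _).antisymm hle⟩

end Rank

/-- If `Z = ∑ pₖρₖΠₖ` is positive definite, then the column space of `ρᵢΠᵢρᵢ` equals
the column space of `ρᵢ`; in particular `rank (ρᵢΠᵢρᵢ) = rᵢ`. -/
theorem stmt_5 {m n : ℕ} (p : Fin m → ℝ) (hp : ∀ i, 0 < p i)
    (ρ : Fin m → Matrix (Fin n) (Fin n) ℂ) (hρ : ∀ i, (ρ i).PosSemidef)
    (P : Fin m → Matrix (Fin n) (Fin n) ℂ) (hP : IsProjectiveMeasurement P)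
    (hrank : ∀ i, (P i).rank = (ρ i).rank)
    (hsum : ∑ i, (ρ i).rank = n)
    (Z : Matrix (Fin n) (Fin n) ℂ) (hZ : Z = ∑ k, (p k : ℂ) • (ρ k * P k))
    (hpos : Z.PosDef) :
    ∀ i, LinearMap.range (ρ i * P i * ρ i).mulVecLin = LinearMap.range (ρ i).mulVecLin
      ∧ (ρ i * P i * ρ i).rank = (ρ i).rank := by
  obtain ⟨hortho, hidem, hherm, -⟩ := hP
  have hP : OrthogonalIdempotents P := ⟨hidem, fun i j => hortho i j⟩
  intro i
  simpa only [(hρ i).isHermitian.eq] using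
    stmt_5_general hP (hZ ▸ hpos.isUnit) (hherm i) (hrank i).ge
end
end

section
/- Let (p_i, ρ_i)_{i=1}^m be a linearly independent (LI) ensemble on ℂ^n and let (Π_i) be a projective measurement. If Z = ∑_{k=1}^m p_k ρ_k Π_k is positive definite, then Z − p_iρ_i is positive semidefinite for every i. -/
open Matrix
open scoped ComplexOrder

noncomputable section

/-! Write `A k` for `p k • ρ k`. Each `T k = Z⁻¹ * A k` fixes the range of `P k`, so
`rank (P k) ≤ rank (A k)`. Since the `P k` sum to the identity and the ranks of the `A k` sum to the
dimension, these inequalities are equalities. Hence `T k` is a projection onto the range of `P k`,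
so that `A k * Z⁻¹ * A k = A k`, and therefore `Z - A k = (1 - T k)ᴴ * Z * (1 - T k)` is positive
semidefinite. -/

section Rank

variable {ι l d K : Type*} [Fintype d] [Field K]

lemma matrix_rank_add_le (A B : Matrix l d K) : (A + B).rank ≤ A.rank + B.rank := by
  have hrange : LinearMap.range (A + B).mulVecLin ≤
      LinearMap.range A.mulVecLin ⊔ LinearMap.range B.mulVecLin := by
    rw [Matrix.mulVecLin_add]
    exact LinearMap.range_add_le _ _
  exact (Submodule.finrank_mono hrange).trans (Submodule.finrank_add_le_finrank_add_finrank _ _)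

lemma matrix_rank_sum_le (s : Finset ι) (A : ι → Matrix l d K) :
    (∑ i ∈ s, A i).rank ≤ ∑ i ∈ s, (A i).rank :=
  Finset.le_sum_of_subadditive _ Matrix.rank_zero.le matrix_rank_add_le s A

lemma rank_le_rank_of_sum_eq_one [Fintype ι] [DecidableEq d] {A P : ι → Matrix d d K}
    (hP : ∑ i, P i = 1) (hrank : ∑ i, (A i).rank ≤ Fintype.card d)
    (hPA : ∀ i, (P i).rank ≤ (A i).rank) (i : ι) : (A i).rank ≤ (P i).rank := by
  have hsum : ∑ i, (A i).rank ≤ ∑ i, (P i).rank :=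
    calc ∑ i, (A i).rank ≤ (∑ i, P i).rank := by rwa [hP, Matrix.rank_one]
      _ ≤ ∑ i, (P i).rank := matrix_rank_sum_le _ _
  have hle : ∀ i ∈ Finset.univ, (P i).rank ≤ (A i).rank := fun i _ => hPA i
  have heq := (Finset.sum_eq_sum_iff_of_le hle).1 ((Finset.sum_le_sum hle).antisymm hsum)
  exact (heq i (Finset.mem_univ i)).ge

lemma isIdempotentElem_of_mul_eq_of_rank_le {T P : Matrix d d K} (hTP : T * P = P)
    (hrank : T.rank ≤ P.rank) : IsIdempotentElem T := by
  have hle : LinearMap.range P.mulVecLin ≤ LinearMap.range T.mulVecLin := by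
    rw [← hTP, Matrix.mulVecLin_mul]
    exact LinearMap.range_comp_le_range _ _
  have hrange := Submodule.eq_of_le_of_finrank_le hle hrank
  classical
  refine Matrix.ext_of_mulVec_single fun j => ?_
  obtain ⟨y, hy⟩ : T *ᵥ Pi.single j 1 ∈ LinearMap.range P.mulVecLin := hrange ▸ ⟨_, rfl⟩
  rw [← Matrix.mulVec_mulVec, ← hy, Matrix.mulVecLin_apply, Matrix.mulVec_mulVec, hTP]

end Rank

section PosDef

variable {ι d K : Type*} [Fintype d] [DecidableEq d] [Field K] [PartialOrder K] [StarRing K]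

lemma posSemidef_sub_of_isIdempotentElem_inv_mul {Z A : Matrix d d K} (hZ : Z.PosDef)
    (hA : A.IsHermitian) (hT : IsIdempotentElem (Z⁻¹ * A)) : (Z - A).PosSemidef := by
  have hdet : IsUnit Z.det := (Matrix.isUnit_iff_isUnit_det Z).1 hZ.isUnit
  have hZT : Z * (Z⁻¹ * A) = A := Matrix.mul_nonsing_inv_cancel_left _ _ hdet
  have hAT : A * (Z⁻¹ * A) = A :=
    calc A * (Z⁻¹ * A) = Z * (Z⁻¹ * A * (Z⁻¹ * A)) := by
          rw [Matrix.mul_assoc Z⁻¹, Matrix.mul_nonsing_inv_cancel_left _ _ hdet]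
      _ = A := by rw [hT.eq, hZT]
  have hstar : (1 - Z⁻¹ * A)ᴴ = 1 - A * Z⁻¹ := by
    rw [Matrix.conjTranspose_sub, Matrix.conjTranspose_mul, Matrix.conjTranspose_one,
      hZ.isHermitian.inv.eq, hA.eq]
  have hfactor : Z - A = (1 - Z⁻¹ * A)ᴴ * Z * (1 - Z⁻¹ * A) := by
    rw [hstar, Matrix.sub_mul, Matrix.one_mul, Matrix.nonsing_inv_mul_cancel_right _ _ hdet,
      Matrix.sub_mul, Matrix.mul_sub, Matrix.mul_sub, Matrix.mul_one, Matrix.mul_one, hZT, hAT,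
      sub_self, sub_zero]
  rw [hfactor]
  exact hZ.posSemidef.conjTranspose_mul_mul_same _

theorem stmt_10_general [Fintype ι] {A P : ι → Matrix d d K} (hA : ∀ i, (A i).IsHermitian)
    (hrank : ∑ i, (A i).rank ≤ Fintype.card d) (hP : CompleteOrthogonalIdempotents P)
    (hpos : (∑ k, A k * P k).PosDef) (i : ι) : (∑ k, A k * P k - A i).PosSemidef := by
  classical
  set Z := ∑ k, A k * P k with hZ
  have hdet : IsUnit Z.det := (Matrix.isUnit_iff_isUnit_det Z).1 hpos.isUnit
  have hZP (k : ι) : Z * P k = A k * P k := by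
    simp [hZ, Finset.sum_mul, Matrix.mul_assoc, hP.mul_eq]
  have hTP (k : ι) : Z⁻¹ * A k * P k = P k := by
    rw [Matrix.mul_assoc, ← hZP, Matrix.nonsing_inv_mul_cancel_left _ _ hdet]
  have hrankT (k : ι) : (Z⁻¹ * A k).rank = (A k).rank :=
    Matrix.rank_mul_eq_right_of_isUnit_det _ _ (Matrix.isUnit_nonsing_inv_det Z hdet)
  have hPA (k : ι) : (P k).rank ≤ (A k).rank := by
    rw [← hrankT, ← hTP]
    exact Matrix.rank_mul_le_left _ _
  have hAP : (A i).rank ≤ (P i).rank := rank_le_rank_of_sum_eq_one hP.complete hrank hPA i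
  exact posSemidef_sub_of_isIdempotentElem_inv_mul hpos (hA i)
    (isIdempotentElem_of_mul_eq_of_rank_le (hTP i) ((hrankT i).trans_le hAP))

end PosDef

lemma IsProjectiveMeasurement.completeOrthogonalIdempotents {ι : Type} [Fintype ι] {n : ℕ}
    {P : ι → Matrix (Fin n) (Fin n) ℂ} (hP : IsProjectiveMeasurement P) :
    CompleteOrthogonalIdempotents P where
  idem := hP.2.1
  ortho := hP.1
  complete := hP.2.2.2

lemma IsEnsemble.isHermitian_smul {ι : Type} [Fintype ι] {n : ℕ} {p : ι → ℝ}
    {ρ : ι → Matrix (Fin n) (Fin n) ℂ} (h : IsEnsemble p ρ) (i : ι) :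
    ((p i : ℂ) • ρ i).IsHermitian :=
  (h.2.2.1 i).isHermitian.smul (Complex.conj_ofReal (p i))

lemma IsLIEnsemble.sum_rank_smul {ι : Type} [Fintype ι] {n : ℕ} {p : ι → ℝ}
    {ρ : ι → Matrix (Fin n) (Fin n) ℂ} (h : IsLIEnsemble p ρ) :
    ∑ i, ((p i : ℂ) • ρ i).rank = n := by
  have hp (i : ι) : (p i : ℂ) ∈ nonZeroDivisors ℂ :=
    mem_nonZeroDivisors_of_ne_zero (Complex.ofReal_ne_zero.2 (h.1.1 i).ne')
  simp only [Matrix.rank_smul_of_mem_nonZeroDivisors _ (hp _), h.2.1]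

/-- For an LI ensemble and a projective measurement `P`: if `Z = ∑ pₖρₖΠₖ` is positive
definite then `Z - pᵢρᵢ` is positive semidefinite for every `i`. -/
theorem stmt_10 {m n : ℕ} (p : Fin m → ℝ) (ρ : Fin m → Matrix (Fin n) (Fin n) ℂ)
    (hens : IsLIEnsemble p ρ)
    (P : Fin m → Matrix (Fin n) (Fin n) ℂ) (hP : IsProjectiveMeasurement P)
    (Z : Matrix (Fin n) (Fin n) ℂ) (hZ : Z = ∑ k, (p k : ℂ) • (ρ k * P k))
    (hpos : Z.PosDef) :
    ∀ i, (Z - (p i : ℂ) • ρ i).PosSemidef := by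
  simp only [hZ, ← Matrix.smul_mul] at hpos ⊢
  exact stmt_10_general hens.1.isHermitian_smul (by rw [hens.sum_rank_smul, Fintype.card_fin])
    hP.completeOrthogonalIdempotents hpos
end
end

section
/- Let (q_i, σ_i)_{i=1}^m be a linearly independent (LI) ensemble on ℂ^n with r_i = rank σ_i, and let ζ_{ij} ∈ ℂ^n (1 ≤ i ≤ m, 1 ≤ j ≤ r_i) be vectors forming a basis of ℂ^n with q_iσ_i = ∑_{j=1}^{r_i} ζ_{ij}ζ_{ij}* for each i. Let F be the n×n Gram matrix of the ζ_{ij} (entries ⟨ζ_{i₁j₁}, ζ_{i₂j₂}⟩, conjugate-linear in the first argument, indices ordered by groups i), let F^{1/2} be its positive definite square root, and let H^{(ii)} be the i-th r_i×r_i diagonal block of F^{1/2}, which is positive definite. Define φ_{ij} = ∑_{k=1}^{r_i} ((H^{(ii)})^{-1/2})_{kj} ζ_{ik}, c = (∑_{i,j} ‖φ_{ij}‖²)^{-1}, p_i = c ∑_{j} ‖φ_{ij}‖², and ρ_i = (∑_j φ_{ij}φ_{ij}*)/(∑_j ‖φ_{ij}‖²). Then (p_i, ρ_i)_{i=1}^m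 is an LI ensemble with the column space of ρ_i equal to the column space of σ_i for every i, and the pretty good measurement of (q_i, σ_i) is an optimal POVM for the minimum error discrimination of (p_i, ρ_i). -/
open Matrix
open scoped ComplexOrder

noncomputable section

/-!
Let `Z` have the vectors `ζᵢⱼ` as columns, with column blocks `Zᵢ`, so that `qᵢσᵢ = Zᵢ Zᵢ*` and
`S = Z Z*`, and write `R = S^{1/2}`. Since `(Z* R⁻¹ Z)² = Z* Z = F`, the square root of the Gram
matrix is `F^{1/2} = Z* R⁻¹ Z`, whose diagonal blocks are `Hᵢ = Zᵢ* R⁻¹ Zᵢ`. Hence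
`pᵢρᵢ = c Zᵢ Hᵢ⁻¹ Zᵢ*` with `c > 0`. For the pretty good measurement `Πᵢ = R⁻¹ Zᵢ Zᵢ* R⁻¹` this
gives `∑ᵢ pᵢρᵢΠᵢ = c R`, and both Schur complements of the block matrix `[R, Zᵢ; Zᵢ*, Hᵢ]` are
positive semidefinite because one of them vanishes; the other one is `R - Zᵢ Hᵢ⁻¹ Zᵢ*`, so
`pᵢρᵢ ≤ c R`, which is the optimality condition of Holevo and Yuen–Kennedy–Lax.
-/

section Matrices

variable {𝕜 k l : Type*} [RCLike 𝕜] [Fintype l]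

theorem range_mulVecLin_mul_of_isUnit {α : Type*} [CommRing α] [DecidableEq l]
    (A : Matrix k l α) {B : Matrix l l α} (hB : IsUnit B) :
    LinearMap.range (A * B).mulVecLin = LinearMap.range A.mulVecLin := by
  rw [mulVecLin_mul]
  exact LinearMap.range_comp_of_range_eq_top _
    (LinearMap.range_eq_top.2 (mulVec_surjective_iff_isUnit.2 hB))

theorem range_mulVecLin_smul {K : Type*} [Field K] (A : Matrix k l K) {c : K} (hc : c ≠ 0) :
    LinearMap.range (c • A).mulVecLin = LinearMap.range A.mulVecLin := by
  have hcA : (c • A).mulVecLin = c • A.mulVecLin := LinearMap.ext (smul_mulVec c A)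
  rw [hcA, LinearMap.range_smul _ _ hc]

theorem range_mulVecLin_eq_bot {α : Type*} [CommSemiring α] {A : Matrix k l α} :
    LinearMap.range A.mulVecLin = ⊥ ↔ A = 0 := by
  classical
  rw [LinearMap.range_eq_bot, ← toLin'_apply', LinearEquiv.map_eq_zero_iff]

theorem mul_mul_conjTranspose_mul_eq_mul_inv_mul {α : Type*} [CommRing α] [StarRing α]
    [DecidableEq l] (Z : Matrix k l α) {K H : Matrix l l α} (hK : K.IsHermitian)
    (hKH : K * K * H = 1) : Z * K * (Z * K)ᴴ = Z * H⁻¹ * Zᴴ := by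
  rw [inv_eq_left_inv hKH, conjTranspose_mul, hK.eq]
  simp only [Matrix.mul_assoc]

variable [Fintype k]

theorem range_mulVecLin_self_mul_conjTranspose (A : Matrix k l 𝕜) :
    LinearMap.range (A * Aᴴ).mulVecLin = LinearMap.range A.mulVecLin := by
  refine Submodule.eq_of_le_of_finrank_eq ?_ (rank_self_mul_conjTranspose A)
  rw [mulVecLin_mul]
  exact LinearMap.range_comp_le_range _ _

open scoped MatrixOrder Matrix.Norms.L2Operator in
theorem trace_mul_nonneg_of_posSemidef {A B : Matrix k k 𝕜} (hA : A.PosSemidef)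
    (hB : B.PosSemidef) : 0 ≤ (A * B).trace := by
  classical
  obtain ⟨C, rfl⟩ := CStarAlgebra.nonneg_iff_eq_star_mul_self.1 hB.nonneg
  rw [← Matrix.mul_assoc, trace_mul_comm, ← Matrix.mul_assoc]
  exact (hA.mul_mul_conjTranspose_same C).trace_nonneg

open scoped MatrixOrder Matrix.Norms.L2Operator in
theorem eq_of_posSemidef_of_mul_self_eq_mul_self {A B : Matrix k k 𝕜}
    (hA : A.PosSemidef) (hB : B.PosSemidef) (h : A * A = B * B) : A = B := by
  classical
  exact (CFC.mul_self_eq_mul_self_iff A B hA.nonneg hB.nonneg).1 h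

variable [DecidableEq k] {R : Matrix k k 𝕜} {Z : Matrix k l 𝕜}

theorem eq_conjTranspose_mul_inv_mul_of_mul_self_eq {T : Matrix l l 𝕜} (hT : T.PosSemidef)
    (hR : R.PosDef) (hTZ : T * T = Zᴴ * Z) (hRZ : R * R = Z * Zᴴ) : T = Zᴴ * R⁻¹ * Z := by
  have hu : IsUnit R.det := (isUnit_iff_isUnit_det R).1 hR.isUnit
  refine eq_of_posSemidef_of_mul_self_eq_mul_self hT
    (hR.inv.posSemidef.conjTranspose_mul_mul_same Z) ?_
  calc T * T = Zᴴ * (R⁻¹ * (R * R) * R⁻¹) * Z := by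
        rw [nonsing_inv_mul_cancel_left _ _ hu, mul_nonsing_inv _ hu, Matrix.mul_one, hTZ]
    _ = Zᴴ * R⁻¹ * Z * (Zᴴ * R⁻¹ * Z) := by
        rw [hRZ]; simp only [Matrix.mul_assoc]

theorem posSemidef_sub_mul_inv_mul_conjTranspose [DecidableEq l] (hR : R.PosDef)
    (hZ : Function.Injective Z.mulVec) :
    (R - Z * (Zᴴ * R⁻¹ * Z)⁻¹ * Zᴴ).PosSemidef := by
  have hH : (Zᴴ * R⁻¹ * Z).PosDef := hR.inv.conjTranspose_mul_mul_same hZ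
  have := hR.isUnit.invertible
  have := hH.isUnit.invertible
  rw [← PosDef.fromBlocks₂₂ R Z hH, PosDef.fromBlocks₁₁ Z _ hR, sub_self]
  exact .zero

end Matrices

section ColumnBlocks

variable {ι α k : Type*} {κ : ι → Type*}

/-- The matrix `Zᵢ` whose columns are the `i`-th group `ζᵢⱼ` of a family of vectors that is indexed
by pairs `(i, j)`; `(Matrix.of ζ)ᵀ` is the matrix of all the columns. -/
def colBlock (ζ : (i : ι) × κ i → k → α) (i : ι) : Matrix k (κ i) α :=
  (Matrix.of fun j => ζ ⟨i, j⟩)ᵀ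

theorem injective_mulVec_colBlock [CommRing α] [∀ i, Fintype (κ i)] {ζ : (i : ι) × κ i → k → α}
    (hζ : LinearIndependent α ζ) (i : ι) : Function.Injective (colBlock ζ i).mulVec :=
  mulVec_injective_iff.2 (hζ.comp (Sigma.mk i) sigma_mk_injective)

theorem colBlock_eq_mul [CommSemiring α] [∀ i, Fintype (κ i)] {ζ φ : (i : ι) × κ i → k → α}
    {i : ι} {K : Matrix (κ i) (κ i) α} (hφ : ∀ j, φ ⟨i, j⟩ = ∑ l, K l j • ζ ⟨i, l⟩) :
    colBlock φ i = colBlock ζ i * K := by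
  ext x j
  simp [colBlock, hφ, mul_apply, mul_comm]

theorem mul_conjTranspose_eq_sum_colBlock [Fintype ι] [∀ i, Fintype (κ i)]
    [NonUnitalNonAssocSemiring α] [Star α] (ζ : (i : ι) × κ i → k → α) :
    (of ζ)ᵀ * (of ζ)ᵀᴴ = ∑ i, colBlock ζ i * (colBlock ζ i)ᴴ := by
  ext x y
  simp [colBlock, mul_apply, Matrix.sum_apply, Fintype.sum_sigma]

theorem blockDiag'_conjTranspose_mul_mul [Fintype k] [Semiring α] [StarRing α]
    (ζ : (i : ι) × κ i → k → α) (M : Matrix k k α) (i : ι) :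
    blockDiag' ((of ζ)ᵀᴴ * M * (of ζ)ᵀ) i = (colBlock ζ i)ᴴ * M * colBlock ζ i := by
  ext a b
  simp [blockDiag'_apply, colBlock, mul_apply]

theorem blockDiag'_eq_of_mul_self_eq_gram {𝕜 : Type*} [RCLike 𝕜] [Fintype k] [DecidableEq k]
    [Fintype ι] [∀ i, Fintype (κ i)] {ζ : (i : ι) × κ i → k → 𝕜}
    {T : Matrix ((i : ι) × κ i) ((i : ι) × κ i) 𝕜} {R : Matrix k k 𝕜} (hT : T.PosSemidef)
    (hR : R.PosDef) (hTζ : T * T = (of ζ)ᵀᴴ * (of ζ)ᵀ)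
    (hRζ : R * R = ∑ i, colBlock ζ i * (colBlock ζ i)ᴴ) (i : ι) :
    blockDiag' T i = (colBlock ζ i)ᴴ * R⁻¹ * colBlock ζ i := by
  rw [← mul_conjTranspose_eq_sum_colBlock] at hRζ
  rw [eq_conjTranspose_mul_inv_mul_of_mul_self_eq hT hR hTζ hRζ,
    blockDiag'_conjTranspose_mul_mul]

end ColumnBlocks

section OuterProducts

variable {n : ℕ} {κ : Type*} [Fintype κ]

theorem sum_outer_col (A : Matrix (Fin n) κ ℂ) : ∑ j, outer (A.col j) = A * Aᴴ := by
  ext x y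
  simp [outer, Matrix.sum_apply, mul_apply, vecMulVec_apply]

theorem sum_re_star_dotProduct_col (A : Matrix (Fin n) κ ℂ) :
    ∑ j, (star (A.col j) ⬝ᵥ A.col j).re = (A * Aᴴ).trace.re := by
  simp only [← sum_outer_col, trace_sum, Complex.re_sum, outer, trace_vecMulVec, dotProduct_comm]

end OuterProducts

section Ensembles

variable {ι : Type} {n : ℕ} {p : ι → ℝ} {ρ A : ι → Matrix (Fin n) (Fin n) ℂ}

theorem ofReal_re_trace_of_posSemidef {B : Matrix (Fin n) (Fin n) ℂ} (hB : B.PosSemidef) :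
    (B.trace.re : ℂ) = B.trace :=
  (Complex.eq_re_of_ofReal_le (r := 0) (by simpa using hB.trace_nonneg)).symm

theorem re_trace_pos_of_posSemidef {B : Matrix (Fin n) (Fin n) ℂ} (hB : B.PosSemidef)
    (hB0 : B ≠ 0) : 0 < B.trace.re :=
  (Complex.pos_iff.1 (hB.trace_nonneg.lt_of_ne' (mt hB.trace_eq_zero_iff.1 hB0))).1

/-- The states `ρᵢ = Aᵢ / tr Aᵢ` of the ensemble obtained by normalizing a family of nonzero
positive semidefinite matrices `Aᵢ` (unnormalized states). -/
def ensembleState (A : ι → Matrix (Fin n) (Fin n) ℂ) (i : ι) : Matrix (Fin n) (Fin n) ℂ :=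
  ((A i).trace.re : ℂ)⁻¹ • A i

theorem range_mulVecLin_ensembleState {i : ι} (hA : (A i).PosSemidef) :
    LinearMap.range (ensembleState A i).mulVecLin = LinearMap.range (A i).mulVecLin := by
  obtain hA0 | hA0 := eq_or_ne (A i) 0
  · rw [ensembleState, hA0, smul_zero]
  · exact range_mulVecLin_smul _
      (inv_ne_zero (by exact_mod_cast (re_trace_pos_of_posSemidef hA hA0).ne'))

variable [Fintype ι]

theorem IsEnsemble.nonempty (h : IsEnsemble p ρ) : Nonempty ι := by
  by_contra hι
  rw [not_nonempty_iff] at hι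
  simpa using h.2.1

theorem IsEnsemble.state_ne_zero (h : IsEnsemble p ρ) (i : ι) : ρ i ≠ 0 := fun h0 => by
  simpa [h0] using h.2.2.2 i

/-- The probabilities `pᵢ = tr Aᵢ / ∑ⱼ tr Aⱼ` of the ensemble obtained by normalizing a family of
nonzero positive semidefinite matrices `Aᵢ` (unnormalized states). -/
def ensembleProb (A : ι → Matrix (Fin n) (Fin n) ℂ) (i : ι) : ℝ :=
  (A i).trace.re / ∑ j, (A j).trace.re

theorem isEnsemble_ensembleState [Nonempty ι] (hA : ∀ i, (A i).PosSemidef)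
    (hA0 : ∀ i, A i ≠ 0) : IsEnsemble (ensembleProb A) (ensembleState A) := by
  have hpos (i) : 0 < (A i).trace.re := re_trace_pos_of_posSemidef (hA i) (hA0 i)
  have hsum : 0 < ∑ j, (A j).trace.re :=
    Finset.sum_pos (fun i _ => hpos i) Finset.univ_nonempty
  refine ⟨fun i => div_pos (hpos i) hsum, ?_, fun i => (hA i).smul ?_, fun i => ?_⟩
  · simp only [ensembleProb, ← Finset.sum_div, div_self hsum.ne']
  · exact_mod_cast (inv_pos.2 (hpos i)).le
  · rw [ensembleState, trace_smul, ← ofReal_re_trace_of_posSemidef (hA i), smul_eq_mul]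
    exact inv_mul_cancel₀ (by exact_mod_cast (hpos i).ne')

theorem ensembleProb_smul_ensembleState {i : ι} (hA : (A i).PosSemidef) :
    (ensembleProb A i : ℂ) • ensembleState A i = (((∑ j, (A j).trace.re)⁻¹ : ℝ) : ℂ) • A i := by
  obtain hA0 | hA0 := eq_or_ne (A i) 0
  · rw [ensembleState, hA0, smul_zero, smul_zero, smul_zero]
  have htr : ((A i).trace.re : ℂ) ≠ 0 := by
    exact_mod_cast (re_trace_pos_of_posSemidef hA hA0).ne'
  rw [ensembleProb, ensembleState, smul_smul, Complex.ofReal_div, div_mul_eq_mul_div,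
    mul_inv_cancel₀ htr, one_div, Complex.ofReal_inv]

theorem IsLIEnsemble.of_range_eq {q : ι → ℝ} {σ : ι → Matrix (Fin n) (Fin n) ℂ}
    (hσ : IsLIEnsemble q σ) (hρ : IsEnsemble p ρ)
    (hrange : ∀ i, LinearMap.range (ρ i).mulVecLin = LinearMap.range (σ i).mulVecLin) :
    IsLIEnsemble p ρ := by
  have hrank (i) : (ρ i).rank = (σ i).rank := by rw [Matrix.rank, hrange, Matrix.rank]
  refine ⟨hρ, ?_, ?_⟩
  · simpa only [hrank] using hσ.2.1
  · simpa only [hrange] using hσ.2.2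

theorem IsEnsemble.ne_zero_of_range_eq {p : ι → ℝ} {σ : ι → Matrix (Fin n) (Fin n) ℂ}
    (hσ : IsEnsemble p σ) {i : ι}
    (hrange : LinearMap.range (A i).mulVecLin = LinearMap.range (σ i).mulVecLin) : A i ≠ 0 := by
  rw [ne_eq, ← range_mulVecLin_eq_bot, hrange, range_mulVecLin_eq_bot]
  exact hσ.state_ne_zero i

theorem IsLIEnsemble.ensembleState {q : ι → ℝ} {σ : ι → Matrix (Fin n) (Fin n) ℂ}
    (hσ : IsLIEnsemble q σ) (hA : ∀ i, (A i).PosSemidef)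
    (hrange : ∀ i, LinearMap.range (A i).mulVecLin = LinearMap.range (σ i).mulVecLin) :
    IsLIEnsemble (ensembleProb A) (ensembleState A) := by
  have := hσ.1.nonempty
  have hA0 (i) : A i ≠ 0 := hσ.1.ne_zero_of_range_eq (hrange i)
  exact hσ.of_range_eq (isEnsemble_ensembleState hA hA0) fun i =>
    (range_mulVecLin_ensembleState (hA i)).trans (hrange i)

end Ensembles

section Measurements

variable {ι : Type} [Fintype ι] {n : ℕ} {p : ι → ℝ} {ρ P : ι → Matrix (Fin n) (Fin n) ℂ}

theorem succProb_eq_re_trace_sum (p : ι → ℝ) (ρ E : ι → Matrix (Fin n) (Fin n) ℂ) :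
    succProb p ρ E = (∑ i, ((p i : ℂ) • ρ i) * E i).trace.re := by
  simp only [succProb, trace_sum, Complex.re_sum, Matrix.smul_mul, trace_smul, smul_eq_mul,
    Complex.re_ofReal_mul]

theorem IsPOVM.isOptimal_of_posSemidef_sub (hP : IsPOVM P)
    (h : ∀ j, ((∑ i, ((p i : ℂ) • ρ i) * P i) - (p j : ℂ) • ρ j).PosSemidef) :
    IsOptimal p ρ P := by
  refine ⟨hP, fun E hE => ?_⟩
  rw [succProb_eq_re_trace_sum, succProb_eq_re_trace_sum, ← sub_nonneg, ← Complex.sub_re,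
    ← trace_sub]
  set Y := ∑ i, ((p i : ℂ) • ρ i) * P i
  have hY : Y - ∑ j, ((p j : ℂ) • ρ j) * E j = ∑ j, (Y - (p j : ℂ) • ρ j) * E j := by
    simp only [sub_mul, Finset.sum_sub_distrib, ← Finset.mul_sum, hE.2, Matrix.mul_one]
  rw [hY, trace_sum]
  exact (Complex.nonneg_iff.1 <|
    Finset.sum_nonneg fun j _ => trace_mul_nonneg_of_posSemidef (h j) (hE.1 j)).1

theorem isPOVM_pgm {A : ι → Matrix (Fin n) (Fin n) ℂ} {R : Matrix (Fin n) (Fin n) ℂ}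
    (hA : ∀ i, (A i).PosSemidef) (hR : R.PosDef) (hRA : R * R = ∑ i, A i) :
    IsPOVM fun i => R⁻¹ * A i * R⁻¹ := by
  have hu : IsUnit R.det := (isUnit_iff_isUnit_det R).1 hR.isUnit
  refine ⟨fun i => ?_, ?_⟩
  · simpa only [hR.inv.isHermitian.eq] using (hA i).mul_mul_conjTranspose_same R⁻¹
  · rw [← Finset.sum_mul, ← Finset.mul_sum, ← hRA, nonsing_inv_mul_cancel_left _ _ hu,
      mul_nonsing_inv _ hu]

variable {κ : ι → Type*} [∀ i, Fintype (κ i)] [∀ i, DecidableEq (κ i)]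
  {Z : ∀ i, Matrix (Fin n) (κ i) ℂ} {R : Matrix (Fin n) (Fin n) ℂ}

theorem isOptimal_pgm (hZ : ∀ i, Function.Injective (Z i).mulVec) (hR : R.PosDef)
    (hRZ : R * R = ∑ i, Z i * (Z i)ᴴ) {c : ℝ} (hc : 0 ≤ c) (hρ : ∀ i, (p i : ℂ) • ρ i =
      (c : ℂ) • (Z i * ((Z i)ᴴ * R⁻¹ * Z i)⁻¹ * (Z i)ᴴ)) :
    IsOptimal p ρ fun i => R⁻¹ * (Z i * (Z i)ᴴ) * R⁻¹ := by
  have hH (i) : IsUnit ((Z i)ᴴ * R⁻¹ * Z i).det :=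
    (isUnit_iff_isUnit_det _).1 (hR.inv.conjTranspose_mul_mul_same (hZ i)).isUnit
  have hterm (i) : ((p i : ℂ) • ρ i) * (R⁻¹ * (Z i * (Z i)ᴴ) * R⁻¹) =
      (c : ℂ) • (Z i * (Z i)ᴴ * R⁻¹) := by
    calc ((p i : ℂ) • ρ i) * (R⁻¹ * (Z i * (Z i)ᴴ) * R⁻¹)
        = (c : ℂ) • (Z i * (((Z i)ᴴ * R⁻¹ * Z i)⁻¹ * ((Z i)ᴴ * R⁻¹ * Z i)) *
            ((Z i)ᴴ * R⁻¹)) := by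
          rw [hρ, Matrix.smul_mul]; simp only [Matrix.mul_assoc]
      _ = (c : ℂ) • (Z i * (Z i)ᴴ * R⁻¹) := by
          rw [nonsing_inv_mul _ (hH i), Matrix.mul_one, Matrix.mul_assoc]
  have hsum : ∑ i, ((p i : ℂ) • ρ i) * (R⁻¹ * (Z i * (Z i)ᴴ) * R⁻¹) = (c : ℂ) • R := by
    simp only [hterm]
    rw [← Finset.smul_sum, ← Finset.sum_mul, ← hRZ,
      mul_nonsing_inv_cancel_right _ _ ((isUnit_iff_isUnit_det R).1 hR.isUnit)]
  refine (isPOVM_pgm (fun i => posSemidef_self_mul_conjTranspose (Z i)) hR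
    hRZ).isOptimal_of_posSemidef_sub fun i => ?_
  rw [hsum, hρ, ← smul_sub]
  exact (posSemidef_sub_mul_inv_mul_conjTranspose hR (hZ i)).smul (by exact_mod_cast hc)

theorem isOptimal_ensembleState_pgm {A : ι → Matrix (Fin n) (Fin n) ℂ}
    (hZ : ∀ i, Function.Injective (Z i).mulVec) (hR : R.PosDef)
    (hRZ : R * R = ∑ i, Z i * (Z i)ᴴ)
    (hA : ∀ i, A i = Z i * ((Z i)ᴴ * R⁻¹ * Z i)⁻¹ * (Z i)ᴴ) :
    IsOptimal (ensembleProb A) (ensembleState A) fun i => R⁻¹ * (Z i * (Z i)ᴴ) * R⁻¹ := by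
  have hA_psd (i) : (A i).PosSemidef := by
    rw [hA]
    exact (hR.inv.conjTranspose_mul_mul_same (hZ i)).inv.posSemidef.mul_mul_conjTranspose_same _
  have htr : 0 ≤ ∑ i, (A i).trace.re :=
    Finset.sum_nonneg fun i _ => (Complex.nonneg_iff.1 (hA_psd i).trace_nonneg).1
  refine isOptimal_pgm hZ hR hRZ (inv_nonneg.2 htr) fun i => ?_
  rw [ensembleProb_smul_ensembleState (hA_psd i), hA]

end Measurements

/-- Construction of the inverse map `𝓡⁻¹`: from an LI ensemble `(q, σ)` with pure-state
decomposition `qᵢσᵢ = ∑ⱼ ζᵢⱼζᵢⱼ*`, Gram matrix `F`, square root `F^{1/2}` with diagonal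
blocks `H⁽ⁱⁱ⁾`, the vectors `φᵢⱼ = ∑ₖ ((H⁽ⁱⁱ⁾)^{-1/2})ₖⱼ ζᵢₖ` define an LI ensemble
`(p, ρ)` with the same supports, whose optimal POVM is the PGM of `(q, σ)`. -/
theorem stmt_14 {m n : ℕ} (q : Fin m → ℝ) (σ : Fin m → Matrix (Fin n) (Fin n) ℂ)
    (hens : IsLIEnsemble q σ)
    (r : Fin m → ℕ) (hr : ∀ i, (σ i).rank = r i)
    (ζ : ((i : Fin m) × Fin (r i)) → (Fin n → ℂ))
    (hli : LinearIndependent ℂ ζ) (hsp : Submodule.span ℂ (Set.range ζ) = ⊤)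
    (hdec : ∀ i, (q i : ℂ) • σ i = ∑ j : Fin (r i), outer (ζ ⟨i, j⟩))
    (F : Matrix ((i : Fin m) × Fin (r i)) ((i : Fin m) × Fin (r i)) ℂ)
    (hF : ∀ a b, F a b = star (ζ a) ⬝ᵥ ζ b)
    (RF : Matrix ((i : Fin m) × Fin (r i)) ((i : Fin m) × Fin (r i)) ℂ)
    (hRF : RF.PosDef) (hRF2 : RF * RF = F)
    (K : ∀ i, Matrix (Fin (r i)) (Fin (r i)) ℂ)
    (hK : ∀ i, (K i).PosDef)
    (hK2 : ∀ i, (K i * K i) * (Matrix.of fun a b => RF ⟨i, a⟩ ⟨i, b⟩) = 1)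
    (φ : ((i : Fin m) × Fin (r i)) → (Fin n → ℂ))
    (hφ : ∀ (i : Fin m) (j : Fin (r i)), φ ⟨i, j⟩ = ∑ k : Fin (r i), K i k j • ζ ⟨i, k⟩)
    (p : Fin m → ℝ)
    (hp : ∀ i, p i = (∑ j : Fin (r i), (star (φ ⟨i, j⟩) ⬝ᵥ φ ⟨i, j⟩).re) /
        (∑ a : (i : Fin m) × Fin (r i), (star (φ a) ⬝ᵥ φ a).re))
    (ρ : Fin m → Matrix (Fin n) (Fin n) ℂ)
    (hρ : ∀ i, ρ i = (((∑ j : Fin (r i), (star (φ ⟨i, j⟩) ⬝ᵥ φ ⟨i, j⟩).re : ℝ) : ℂ))⁻¹ •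
        ∑ j : Fin (r i), outer (φ ⟨i, j⟩)) :
    IsLIEnsemble p ρ ∧
    (∀ i, LinearMap.range (ρ i).mulVecLin = LinearMap.range (σ i).mulVecLin) ∧
    PGMIsOptimal q σ p ρ := by
  let A (i : Fin m) := colBlock φ i * (colBlock φ i)ᴴ
  have hσ (i) : (q i : ℂ) • σ i = colBlock ζ i * (colBlock ζ i)ᴴ :=
    (hdec i).trans (sum_outer_col (colBlock ζ i))
  have hφζ (i) : colBlock φ i = colBlock ζ i * K i := colBlock_eq_mul (hφ i)
  have htr (i) : ∑ j, (star (φ ⟨i, j⟩) ⬝ᵥ φ ⟨i, j⟩).re = (A i).trace.re :=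
    sum_re_star_dotProduct_col (colBlock φ i)
  obtain rfl : p = ensembleProb A := by
    ext i; simp only [hp, Fintype.sum_sigma, htr, ensembleProb]
  obtain rfl : ρ = ensembleState A := funext fun i => by
    rw [hρ, htr]; exact congrArg _ (sum_outer_col (colBlock φ i))
  have hA (i) : (A i).PosSemidef := posSemidef_self_mul_conjTranspose (colBlock φ i)
  have hrange (i) : LinearMap.range (A i).mulVecLin = LinearMap.range (σ i).mulVecLin := by
    have hq : (q i : ℂ) ≠ 0 := by exact_mod_cast (hens.1.1 i).ne'
    rw [range_mulVecLin_self_mul_conjTranspose, hφζ, range_mulVecLin_mul_of_isUnit _ (hK i).isUnit,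
      ← range_mulVecLin_self_mul_conjTranspose, ← hσ, range_mulVecLin_smul _ hq]
  refine ⟨hens.ensembleState hA hrange,
    fun i => (range_mulVecLin_ensembleState (hA i)).trans (hrange i), fun R hR hRσ => ?_⟩
  simp only [hσ] at hRσ ⊢
  have hgram : RF * RF = (of ζ)ᵀᴴ * (of ζ)ᵀ := hRF2.trans (Matrix.ext hF)
  refine isOptimal_ensembleState_pgm (injective_mulVec_colBlock hli) hR hRσ fun i => ?_
  change colBlock φ i * (colBlock φ i)ᴴ = _
  rw [← blockDiag'_eq_of_mul_self_eq_gram hRF.posSemidef hR hgram hRσ, hφζ]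
  exact mul_mul_conjTranspose_mul_eq_mul_inv_mul _ (hK i).isHermitian (hK2 i)
end
end
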